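/- Let Q ∈ L²_unif(ℝ), τ ∈ L¹_unif(ℝ), K := 2(‖Q‖_{L²_unif(ℝ)} + ‖τ‖_{L¹_unif(ℝ)}), and for u ∈ H¹(ℝ) define t[u] := ∫_ℝ |u'(x)|² dx − ∫_ℝ Q(x)( conj(u'(x)) u(x) + conj(u(x)) u'(x) ) dx + ∫_ℝ τ(x) |u(x)|² dx. Then for every u ∈ H¹(ℝ) and every ε with 0 < ε ≤ (2K+1)^{−1}: |Im t[u]| ≤ 2Kε Re t[u] + 8Kε^{−3} ‖u‖²_{L²(ℝ)}. -/

import Mathlib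

open MeasureTheory

/-- The Stepanov `L²_unif` norm: `(sup_t ∫_t^{t+1} |Q|²)^{1/2}`. -/
noncomputable def stepL2 (Q : ℝ → ℂ) : ℝ :=
  Real.sqrt (⨆ t : ℝ, ∫ s in t..(t + 1), ‖Q s‖ ^ 2)

/-- The Stepanov `L¹_unif` norm: `sup_t ∫_t^{t+1} |τ|`. -/
noncomputable def stepL1 (τ : ℝ → ℂ) : ℝ :=
  ⨆ t : ℝ, ∫ s in t..(t + 1), ‖τ s‖

/-- Membership in the Stepanov space `L²_unif(ℝ)`: locally square integrable with
finite Stepanov norm. -/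
def InStepL2 (Q : ℝ → ℂ) : Prop :=
  AEStronglyMeasurable Q volume ∧
  LocallyIntegrable (fun s => ‖Q s‖ ^ 2) volume ∧
  BddAbove (Set.range fun t : ℝ => ∫ s in t..(t + 1), ‖Q s‖ ^ 2)

/-- Membership in the Stepanov space `L¹_unif(ℝ)`: locally integrable with
finite Stepanov norm. -/
def InStepL1 (τ : ℝ → ℂ) : Prop :=
  LocallyIntegrable τ volume ∧
  BddAbove (Set.range fun t : ℝ => ∫ s in t..(t + 1), ‖τ s‖)

/-- `u ∈ H¹(ℝ)` with derivative `u'`: `u` is absolutely continuous with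
`u x = u 0 + ∫_0^x u'`, and both `u` and `u'` are square integrable. -/
def InH1 (u u' : ℝ → ℂ) : Prop :=
  LocallyIntegrable u' volume ∧
  (∀ x : ℝ, u x = u 0 + ∫ s in (0:ℝ)..x, u' s) ∧
  MemLp u 2 volume ∧ MemLp u' 2 volume

/-- The constant `K = 2(‖Q‖_{L²_unif} + ‖τ‖_{L¹_unif})`. -/
noncomputable def Kc (Q τ : ℝ → ℂ) : ℝ := 2 * (stepL2 Q + stepL1 τ)

/-- The sesquilinear form `t[u] = ‖u'‖² - ∫ Q (conj(u')u + conj(u)u') + ∫ τ|u|²`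
associated with the Schrödinger operator with potential `q = Q' + τ`. -/
noncomputable def tform (Q τ u u' : ℝ → ℂ) : ℂ :=
  (Complex.ofReal (∫ x : ℝ, ‖u' x‖ ^ 2))
    - (∫ x : ℝ, Q x * ((starRingEnd ℂ) (u' x) * u x + (starRingEnd ℂ) (u x) * u' x))
    + ∫ x : ℝ, τ x * (‖u x‖ : ℂ) ^ 2

/-!
On an interval of length `δ`, averaging `‖u x‖² ≤ 2 ‖u y‖² + 2 (∫ ‖u'‖)²` over `y` and applying
Cauchy–Schwarz gives `sup ‖u‖² ≤ 2 δ ∫ ‖u'‖² + 2 δ⁻¹ ∫ ‖u‖²`. Summing over the unit intervals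
`(n, n + 1]` shows that a weight with uniformly bounded integrals over unit intervals has a
quadratic form with relative bound zero with respect to `∫ ‖u'‖²`. With `δ = ε² / 2` and the
weights `|Q|²` and `|τ|`, the lower order terms of `t[u]` are at most `K (ε ‖u'‖² + 2 ε⁻³ ‖u‖²)`;
as `2 K ε ≤ 1`, this controls both `|Im t[u]|` and the defect `‖u'‖² - Re t[u]`.
-/

open Set
open scoped ENNReal ComplexConjugate

section Integral

variable {α : Type*} [MeasurableSpace α] {μ : Measure α}

theorem integral_norm_mul_norm_le_sqrt_mul_sqrt {E F : Type*} [NormedAddCommGroup E]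
    [NormedAddCommGroup F] {f : α → E} {g : α → F} (hf : MemLp f 2 μ) (hg : MemLp g 2 μ) :
    ∫ x, ‖f x‖ * ‖g x‖ ∂μ ≤ √(∫ x, ‖f x‖ ^ 2 ∂μ) * √(∫ x, ‖g x‖ ^ 2 ∂μ) := by
  have holder := integral_mul_norm_le_Lp_mul_Lq (μ := μ) (f := fun x => ‖f x‖)
    (g := fun x => ‖g x‖) Real.HolderConjugate.two_two (by simpa using hf.norm)
    (by simpa using hg.norm)
  simpa only [norm_norm, Real.rpow_two, ← Real.sqrt_eq_rpow] using holder

theorem sq_setIntegral_norm_le {E : Type*} [NormedAddCommGroup E] {f : α → E} {s : Set α}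
    (hs : μ s ≠ ∞) (hf : MemLp f 2 (μ.restrict s)) :
    (∫ x in s, ‖f x‖ ∂μ) ^ 2 ≤ μ.real s * ∫ x in s, ‖f x‖ ^ 2 ∂μ := by
  have : IsFiniteMeasure (μ.restrict s) := isFiniteMeasure_restrict.2 hs
  have cauchy_schwarz := integral_norm_mul_norm_le_sqrt_mul_sqrt hf (memLp_const (1 : ℝ))
  simp only [norm_one, mul_one, one_pow, setIntegral_const, smul_eq_mul] at cauchy_schwarz
  calc (∫ x in s, ‖f x‖ ∂μ) ^ 2 ≤ (√(∫ x in s, ‖f x‖ ^ 2 ∂μ) * √(μ.real s)) ^ 2 := by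
        gcongr
    _ = μ.real s * ∫ x in s, ‖f x‖ ^ 2 ∂μ := by
        rw [mul_pow, Real.sq_sqrt (by positivity), Real.sq_sqrt (by positivity), mul_comm]

theorem lintegral_mul_le_of_iUnion_eq_univ {ι : Type*} [Countable ι] {s : ι → Set α}
    (hs : ∀ i, MeasurableSet (s i)) (hd : Pairwise (Function.onFun Disjoint s))
    (hU : ⋃ i, s i = univ) {w f g : α → ℝ≥0∞} {M : ℝ≥0∞} (hw : AEMeasurable w μ)
    (hwM : ∀ i, ∫⁻ x in s i, w x ∂μ ≤ M) (hfg : ∀ i, ∀ x ∈ s i, f x ≤ ∫⁻ y in s i, g y ∂μ) :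
    ∫⁻ x, w x * f x ∂μ ≤ M * ∫⁻ x, g x ∂μ := by
  have lintegral_eq_tsum (h : α → ℝ≥0∞) : ∫⁻ x, h x ∂μ = ∑' i, ∫⁻ x in s i, h x ∂μ := by
    rw [← lintegral_iUnion hs hd, hU, setLIntegral_univ]
  rw [lintegral_eq_tsum, lintegral_eq_tsum, ← ENNReal.tsum_mul_left]
  refine ENNReal.tsum_le_tsum fun i => ?_
  calc ∫⁻ x in s i, w x * f x ∂μ ≤ ∫⁻ x in s i, w x * ∫⁻ y in s i, g y ∂μ ∂μ :=
        setLIntegral_mono' (hs i) fun x hx => mul_le_mul_right (hfg i x hx) _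
    _ = (∫⁻ x in s i, w x ∂μ) * ∫⁻ y in s i, g y ∂μ := lintegral_mul_const'' _ hw.restrict
    _ ≤ M * ∫⁻ y in s i, g y ∂μ := mul_le_mul_left (hwM i) _

theorem integrable_and_integral_le_of_lintegral_ofReal_le {f : α → ℝ} {c : ℝ}
    (hf : AEStronglyMeasurable f μ) (hf0 : 0 ≤ f) (hc : 0 ≤ c)
    (hfc : ∫⁻ x, ENNReal.ofReal (f x) ∂μ ≤ ENNReal.ofReal c) :
    Integrable f μ ∧ ∫ x, f x ∂μ ≤ c := by
  have hf0' : 0 ≤ᵐ[μ] f := ae_of_all _ hf0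
  refine ⟨⟨hf, (hasFiniteIntegral_iff_ofReal hf0').2 (hfc.trans_lt ENNReal.ofReal_lt_top)⟩, ?_⟩
  rw [integral_eq_lintegral_of_nonneg_ae hf0' hf]
  exact ENNReal.toReal_le_of_le_ofReal hc hfc

theorem integrable_mul_and_integral_mul_le_of_forall_Ioc {w f g : ℝ → ℝ} {M : ℝ}
    (hw : LocallyIntegrable w) (hw0 : 0 ≤ w) (hwM : ∀ t : ℝ, ∫ x in t..(t + 1), w x ≤ M)
    (hf : AEStronglyMeasurable f volume) (hf0 : 0 ≤ f) (hg : Integrable g) (hg0 : 0 ≤ g)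
    (hfg : ∀ n : ℤ, ∀ x ∈ Ioc (n : ℝ) (n + 1), f x ≤ ∫ y in Ioc (n : ℝ) (n + 1), g y) :
    Integrable (fun x => w x * f x) ∧ ∫ x, w x * f x ≤ M * ∫ x, g x := by
  have hM0 : 0 ≤ M :=
    (intervalIntegral.integral_nonneg (by norm_num) fun x _ => hw0 x).trans (hwM 0)
  have setLIntegral_w_le (n : ℤ) :
      ∫⁻ x in Ioc (n : ℝ) (n + 1), ENNReal.ofReal (w x) ≤ ENNReal.ofReal M := by
    have hwn : IntegrableOn w (Ioc (n : ℝ) (n + 1)) :=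
      (hw.integrableOn_isCompact isCompact_Icc).mono_set Ioc_subset_Icc_self
    rw [← ofReal_integral_eq_lintegral_ofReal hwn (ae_of_all _ hw0),
      ← intervalIntegral.integral_of_le (by linarith)]
    exact ENNReal.ofReal_le_ofReal (hwM n)
  have f_le_setLIntegral (n : ℤ) (x : ℝ) (hx : x ∈ Ioc (n : ℝ) (n + 1)) :
      ENNReal.ofReal (f x) ≤ ∫⁻ y in Ioc (n : ℝ) (n + 1), ENNReal.ofReal (g y) := by
    rw [← ofReal_integral_eq_lintegral_ofReal hg.integrableOn (ae_of_all _ hg0)]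
    exact ENNReal.ofReal_le_ofReal (hfg n x hx)
  refine integrable_and_integral_le_of_lintegral_ofReal_le (hw.aestronglyMeasurable.mul hf)
    (mul_nonneg hw0 hf0) (mul_nonneg hM0 (integral_nonneg hg0)) ?_
  simp only [ENNReal.ofReal_mul (hw0 _), ENNReal.ofReal_mul hM0,
    ofReal_integral_eq_lintegral_ofReal hg (ae_of_all _ hg0)]
  exact lintegral_mul_le_of_iUnion_eq_univ (fun _ => measurableSet_Ioc)
    (pairwise_disjoint_Ioc_intCast ℝ) (iUnion_Ioc_intCast ℝ)
    hw.aestronglyMeasurable.aemeasurable.ennreal_ofReal setLIntegral_w_le f_le_setLIntegral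

theorem norm_integral_mul_conj_mul_add_le_sqrt_mul_sqrt {𝕜 : Type*} [RCLike 𝕜] {q u v : α → 𝕜}
    (hv : MemLp v 2 μ) (hqu : MemLp (fun x => q x * u x) 2 μ) :
    ‖∫ x, q x * (conj (v x) * u x + conj (u x) * v x) ∂μ‖ ≤
      2 * √(∫ x, ‖v x‖ ^ 2 ∂μ) * √(∫ x, ‖q x‖ ^ 2 * ‖u x‖ ^ 2 ∂μ) := by
  have norm_integrand_le (x : α) :
      ‖q x * (conj (v x) * u x + conj (u x) * v x)‖ ≤ 2 * (‖v x‖ * ‖q x * u x‖) :=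
    calc ‖q x * (conj (v x) * u x + conj (u x) * v x)‖
        ≤ ‖q x‖ * (‖conj (v x) * u x‖ + ‖conj (u x) * v x‖) := by
          rw [norm_mul]
          gcongr
          exact norm_add_le _ _
      _ = 2 * (‖v x‖ * ‖q x * u x‖) := by
          simp only [norm_mul, RCLike.norm_conj]
          ring
  calc ‖∫ x, q x * (conj (v x) * u x + conj (u x) * v x) ∂μ‖
      ≤ ∫ x, 2 * (‖v x‖ * ‖q x * u x‖) ∂μ :=
        norm_integral_le_of_norm_le ((hv.norm.integrable_mul hqu.norm).const_mul 2)
          (ae_of_all _ norm_integrand_le)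
    _ ≤ 2 * (√(∫ x, ‖v x‖ ^ 2 ∂μ) * √(∫ x, ‖q x * u x‖ ^ 2 ∂μ)) := by
        rw [integral_const_mul]
        gcongr
        exact integral_norm_mul_norm_le_sqrt_mul_sqrt hv hqu
    _ = 2 * √(∫ x, ‖v x‖ ^ 2 ∂μ) * √(∫ x, ‖q x‖ ^ 2 * ‖u x‖ ^ 2 ∂μ) := by
        simp only [norm_mul, mul_pow, mul_assoc]

end Integral

section Primitive

variable {E : Type*} [NormedAddCommGroup E] [NormedSpace ℝ E] {u u' : ℝ → E}

theorem norm_sub_le_setIntegral_norm_of_sub_eq_integral {a b x y : ℝ}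
    (hsub : u x - u y = ∫ s in y..x, u' s) (hu' : IntegrableOn u' (Ioc a b))
    (hx : x ∈ Icc a b) (hy : y ∈ Icc a b) : ‖u x - u y‖ ≤ ∫ s in Ioc a b, ‖u' s‖ := by
  have uIoc_subset : uIoc y x ⊆ Ioc a b := Ioc_subset_Ioc (le_min hy.1 hx.1) (max_le hy.2 hx.2)
  calc ‖u x - u y‖ ≤ ∫ s in uIoc y x, ‖u' s‖ :=
        hsub ▸ intervalIntegral.norm_integral_le_integral_norm_uIoc
    _ ≤ ∫ s in Ioc a b, ‖u' s‖ :=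
        setIntegral_mono_set hu'.norm (ae_of_all _ fun _ => norm_nonneg _) uIoc_subset.eventuallyLE

theorem sq_norm_le_setIntegral_of_sub_eq_integral {a b x : ℝ} (hab : a < b)
    (hsub : ∀ x ∈ Icc a b, ∀ y ∈ Icc a b, u x - u y = ∫ s in y..x, u' s)
    (hu : MemLp u 2 (volume.restrict (Ioc a b))) (hu' : MemLp u' 2 (volume.restrict (Ioc a b)))
    (hx : x ∈ Icc a b) :
    ‖u x‖ ^ 2 ≤ ∫ y in Ioc a b, (2 * (b - a) * ‖u' y‖ ^ 2 + 2 / (b - a) * ‖u y‖ ^ 2) := by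
  have hδ : 0 < b - a := sub_pos.2 hab
  have hvol : volume.real (Ioc a b) = b - a := Real.volume_real_Ioc_of_le hab.le
  have hu_sq := hu.integrable_norm_pow two_ne_zero
  have hu'_sq := hu'.integrable_norm_pow two_ne_zero
  rw [integral_add (hu'_sq.const_mul _) (hu_sq.const_mul _), integral_const_mul,
    integral_const_mul]
  set D := ∫ y in Ioc a b, ‖u' y‖ ^ 2
  set N := ∫ y in Ioc a b, ‖u y‖ ^ 2
  have sq_norm_le (y : ℝ) (hy : y ∈ Ioc a b) : ‖u x‖ ^ 2 ≤ 2 * ((b - a) * D) + 2 * ‖u y‖ ^ 2 :=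
    calc ‖u x‖ ^ 2 ≤ (‖u x - u y‖ + ‖u y‖) ^ 2 := by
          gcongr
          exact norm_le_norm_sub_add _ _
      _ ≤ 2 * (‖u x - u y‖ ^ 2 + ‖u y‖ ^ 2) := add_sq_le
      _ ≤ 2 * ((∫ s in Ioc a b, ‖u' s‖) ^ 2 + ‖u y‖ ^ 2) := by
          gcongr
          exact norm_sub_le_setIntegral_norm_of_sub_eq_integral
            (hsub x hx y (Ioc_subset_Icc_self hy)) (hu'.integrable one_le_two) hx
            (Ioc_subset_Icc_self hy)
      _ ≤ 2 * ((b - a) * D + ‖u y‖ ^ 2) := by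
          gcongr
          exact hvol ▸ sq_setIntegral_norm_le measure_Ioc_lt_top.ne hu'
      _ = 2 * ((b - a) * D) + 2 * ‖u y‖ ^ 2 := by ring
  have average_le : (b - a) * ‖u x‖ ^ 2 ≤ (b - a) * (2 * ((b - a) * D)) + 2 * N := by
    have integral_le := setIntegral_mono_on (integrable_const (‖u x‖ ^ 2))
      ((integrable_const (2 * ((b - a) * D))).add (hu_sq.const_mul 2)) measurableSet_Ioc sq_norm_le
    rwa [integral_add' (integrable_const _) (hu_sq.const_mul 2), setIntegral_const,
      setIntegral_const, hvol, integral_const_mul, smul_eq_mul, smul_eq_mul] at integral_le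
  refine le_of_mul_le_mul_left (average_le.trans_eq ?_) hδ
  field_simp

theorem sq_norm_le_setIntegral_of_le_sub {a b δ x : ℝ} (hδ : 0 < δ) (hδab : δ ≤ b - a)
    (hsub : ∀ x ∈ Icc a b, ∀ y ∈ Icc a b, u x - u y = ∫ s in y..x, u' s)
    (hu : MemLp u 2 (volume.restrict (Ioc a b))) (hu' : MemLp u' 2 (volume.restrict (Ioc a b)))
    (hx : x ∈ Icc a b) :
    ‖u x‖ ^ 2 ≤ ∫ y in Ioc a b, (2 * δ * ‖u' y‖ ^ 2 + 2 / δ * ‖u y‖ ^ 2) := by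
  obtain ⟨c, hac, hcb, hxc⟩ : ∃ c, a ≤ c ∧ c + δ ≤ b ∧ x ∈ Icc c (c + δ) := by
    refine ⟨min x (b - δ), le_min hx.1 (by linarith), ?_, min_le_left _ _, ?_⟩
    · linarith [min_le_right x (b - δ)]
    · exact sub_le_iff_le_add.1 (le_min (by linarith) (by linarith [hx.2]))
  have hsubset : Ioc c (c + δ) ⊆ Ioc a b := Ioc_subset_Ioc hac hcb
  have hmeasure := Measure.restrict_mono hsubset (le_refl (volume : Measure ℝ))
  have sq_norm_le := sq_norm_le_setIntegral_of_sub_eq_integral (by linarith)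
    (fun x hx y hy => hsub x (Icc_subset_Icc hac hcb hx) y (Icc_subset_Icc hac hcb hy))
    (hu.mono_measure hmeasure) (hu'.mono_measure hmeasure) hxc
  rw [add_sub_cancel_left] at sq_norm_le
  refine sq_norm_le.trans (setIntegral_mono_set ?_ (ae_of_all _ fun y => ?_) hsubset.eventuallyLE)
  · exact ((hu'.integrable_norm_pow two_ne_zero).const_mul _).add
      ((hu.integrable_norm_pow two_ne_zero).const_mul _)
  · positivity

theorem integrable_mul_sq_norm_and_integral_le_of_sub_eq_integral
    (hsub : ∀ x y, u x - u y = ∫ s in y..x, u' s) (hu : MemLp u 2) (hu' : MemLp u' 2)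
    {w : ℝ → ℝ} {M : ℝ} (hw : LocallyIntegrable w)
    (hw0 : 0 ≤ w) (hwM : ∀ t : ℝ, ∫ x in t..(t + 1), w x ≤ M) {δ : ℝ} (hδ : 0 < δ)
    (hδ1 : δ ≤ 1) :
    Integrable (fun x => w x * ‖u x‖ ^ 2) ∧
      ∫ x, w x * ‖u x‖ ^ 2 ≤ M * (2 * δ * (∫ x, ‖u' x‖ ^ 2) + 2 / δ * ∫ x, ‖u x‖ ^ 2) := by
  have hu_sq := hu.integrable_norm_pow two_ne_zero
  have hu'_sq := hu'.integrable_norm_pow two_ne_zero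
  rw [← integral_const_mul, ← integral_const_mul,
    ← integral_add (hu'_sq.const_mul _) (hu_sq.const_mul _)]
  refine integrable_mul_and_integral_mul_le_of_forall_Ioc hw hw0 hwM hu_sq.aestronglyMeasurable
    (fun x => by positivity) ((hu'_sq.const_mul _).add (hu_sq.const_mul _))
    (fun x => by positivity) fun n x hx => ?_
  exact sq_norm_le_setIntegral_of_le_sub hδ (by linarith) (fun x _ y _ => hsub x y)
    (hu.restrict _) (hu'.restrict _) (Ioc_subset_Icc_self hx)

end Primitive

theorem abs_im_le_of_norm_sub_ofReal_le {z : ℂ} {θ D R : ℝ} (hθ0 : 0 ≤ θ) (hθ1 : θ ≤ 1)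
    (hz : ‖z - D‖ ≤ θ / 2 * D + R) : |z.im| ≤ θ * z.re + 2 * R := by
  have abs_im_le : |z.im| ≤ ‖z - D‖ := by simpa using Complex.abs_im_le_norm (z - D)
  have re_ge : D - ‖z - D‖ ≤ z.re := by
    have := neg_le_of_abs_le (Complex.abs_re_le_norm (z - D))
    rw [Complex.sub_re, Complex.ofReal_re] at this
    linarith
  calc |z.im| ≤ 2 * ‖z - D‖ - ‖z - D‖ := by linarith
    _ ≤ 2 * (θ / 2 * D + R) - θ * ‖z - D‖ := by
        gcongr
        exact mul_le_of_le_one_left (norm_nonneg _) hθ1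
    _ = θ * (D - ‖z - D‖) + 2 * R := by ring
    _ ≤ θ * z.re + 2 * R := by gcongr

section Stepanov

variable {Q τ : ℝ → ℂ}

theorem stepL1_nonneg (τ : ℝ → ℂ) : 0 ≤ stepL1 τ :=
  Real.iSup_nonneg fun _ =>
    intervalIntegral.integral_nonneg (by linarith) fun _ _ => norm_nonneg _

theorem stepL2_nonneg (Q : ℝ → ℂ) : 0 ≤ stepL2 Q :=
  Real.sqrt_nonneg _

theorem Kc_nonneg (Q τ : ℝ → ℂ) : 0 ≤ Kc Q τ :=
  mul_nonneg zero_le_two (add_nonneg (stepL2_nonneg Q) (stepL1_nonneg τ))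

theorem InStepL1.intervalIntegral_norm_le (hτ : InStepL1 τ) (t : ℝ) :
    ∫ s in t..(t + 1), ‖τ s‖ ≤ stepL1 τ :=
  le_ciSup hτ.2 t

theorem InStepL2.intervalIntegral_sq_norm_le (hQ : InStepL2 Q) (t : ℝ) :
    ∫ s in t..(t + 1), ‖Q s‖ ^ 2 ≤ stepL2 Q ^ 2 := by
  rw [stepL2, Real.sq_sqrt]
  · exact le_ciSup hQ.2.2 t
  · exact Real.iSup_nonneg fun _ =>
      intervalIntegral.integral_nonneg (by linarith) fun _ _ => by positivity

end Stepanov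

section Form

variable {Q τ u u' : ℝ → ℂ} {ε : ℝ}

theorem InH1.sub_eq_integral (hu : InH1 u u') (x y : ℝ) : u x - u y = ∫ s in y..x, u' s := by
  obtain ⟨hloc, hprim, -, -⟩ := hu
  have hint (a b : ℝ) : IntervalIntegrable u' volume a b :=
    (hloc.integrableOn_isCompact isCompact_uIcc).intervalIntegrable
  rw [hprim x, hprim y, add_sub_add_left_eq_sub,
    intervalIntegral.integral_interval_sub_left (hint 0 x) (hint 0 y)]

theorem InH1.integrable_mul_sq_norm_and_integral_le (hu : InH1 u u') {w : ℝ → ℝ} {M : ℝ}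
    (hw : LocallyIntegrable w) (hw0 : 0 ≤ w) (hwM : ∀ t : ℝ, ∫ x in t..(t + 1), w x ≤ M)
    (hε : 0 < ε) (hε1 : ε ≤ 1) :
    Integrable (fun x => w x * ‖u x‖ ^ 2) ∧
      ∫ x, w x * ‖u x‖ ^ 2 ≤
        M * (ε ^ 2 * (∫ x, ‖u' x‖ ^ 2) + 4 * ε⁻¹ ^ 2 * ∫ x, ‖u x‖ ^ 2) := by
  convert integrable_mul_sq_norm_and_integral_le_of_sub_eq_integral hu.sub_eq_integral
    hu.2.2.1 hu.2.2.2 hw hw0 hwM (δ := ε ^ 2 / 2) (by positivity) (by nlinarith) using 5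
  · ring
  · field_simp
    norm_num

theorem InH1.norm_integral_mul_sq_norm_le (hu : InH1 u u') (hτ : InStepL1 τ) (hε : 0 < ε)
    (hε1 : ε ≤ 1) :
    ‖∫ x, τ x * (‖u x‖ : ℂ) ^ 2‖ ≤
      stepL1 τ * (ε ^ 2 * (∫ x, ‖u' x‖ ^ 2) + 4 * ε⁻¹ ^ 2 * ∫ x, ‖u x‖ ^ 2) := by
  obtain ⟨hint, hle⟩ := hu.integrable_mul_sq_norm_and_integral_le (fun x => (hτ.1 x).norm)
    (fun _ => norm_nonneg _) hτ.intervalIntegral_norm_le hε hε1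
  exact (norm_integral_le_of_norm_le hint (ae_of_all _ fun x => by simp)).trans hle

theorem InH1.norm_integral_mul_conj_mul_add_le (hu : InH1 u u') (hQ : InStepL2 Q) (hε : 0 < ε)
    (hε1 : ε ≤ 1) :
    ‖∫ x, Q x * (conj (u' x) * u x + conj (u x) * u' x)‖ ≤
      stepL2 Q * (2 * ε * (∫ x, ‖u' x‖ ^ 2) + 4 * ε⁻¹ ^ 3 * ∫ x, ‖u x‖ ^ 2) := by
  obtain ⟨hint, hle⟩ := hu.integrable_mul_sq_norm_and_integral_le hQ.2.1
    (fun _ => by positivity) hQ.intervalIntegral_sq_norm_le hε hε1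
  have hQu : MemLp (fun x => Q x * u x) 2 := by
    refine (memLp_two_iff_integrable_sq_norm (hQ.1.mul hu.2.2.1.1)).2 ?_
    simpa only [Pi.mul_apply, norm_mul, mul_pow] using hint
  set D := ∫ x, ‖u' x‖ ^ 2
  set N := ∫ x, ‖u x‖ ^ 2
  have hD : 0 ≤ D := integral_nonneg fun _ => by positivity
  have hN : 0 ≤ N := integral_nonneg fun _ => by positivity
  set W := ε ^ 2 * D + 4 * ε⁻¹ ^ 2 * N
  have hW : 0 ≤ W :=
    add_nonneg (mul_nonneg (sq_nonneg ε) hD) (mul_nonneg (by positivity) hN)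
  calc ‖∫ x, Q x * (conj (u' x) * u x + conj (u x) * u' x)‖
      ≤ 2 * √D * √(∫ x, ‖Q x‖ ^ 2 * ‖u x‖ ^ 2) :=
        norm_integral_mul_conj_mul_add_le_sqrt_mul_sqrt hu.2.2.2 hQu
    _ ≤ 2 * √D * (stepL2 Q * √W) := by
        gcongr
        rw [← Real.sqrt_sq (stepL2_nonneg Q), ← Real.sqrt_mul (sq_nonneg _)]
        exact Real.sqrt_le_sqrt hle
    _ = stepL2 Q * (2 * √D * √W) := by ring
    _ ≤ stepL2 Q * (ε * √D ^ 2 + ε⁻¹ * √W ^ 2) :=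
        mul_le_mul_of_nonneg_left (two_mul_le_add_mul_sq hε) (stepL2_nonneg Q)
    _ = stepL2 Q * (2 * ε * D + 4 * ε⁻¹ ^ 3 * N) := by
        rw [Real.sq_sqrt hD, Real.sq_sqrt hW]
        simp only [W]
        field_simp
        ring

theorem InH1.norm_tform_sub_le (hu : InH1 u u') (hQ : InStepL2 Q) (hτ : InStepL1 τ) (hε : 0 < ε)
    (hε1 : ε ≤ 1) :
    ‖tform Q τ u u' - (∫ x, ‖u' x‖ ^ 2 : ℝ)‖ ≤
      Kc Q τ * (ε * (∫ x, ‖u' x‖ ^ 2) + 2 * ε⁻¹ ^ 3 * ∫ x, ‖u x‖ ^ 2) := by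
  have first_order_le := hu.norm_integral_mul_conj_mul_add_le hQ hε hε1
  have potential_le := hu.norm_integral_mul_sq_norm_le hτ hε hε1
  rw [tform, sub_add, sub_sub_cancel_left, norm_neg]
  set D := ∫ x, ‖u' x‖ ^ 2
  set N := ∫ x, ‖u x‖ ^ 2
  have hD : 0 ≤ D := integral_nonneg fun _ => by positivity
  have hN : 0 ≤ N := integral_nonneg fun _ => by positivity
  have weaken : ε ^ 2 * D + 4 * ε⁻¹ ^ 2 * N ≤ 2 * ε * D + 4 * ε⁻¹ ^ 3 * N := by
    have hε_sq : ε ^ 2 ≤ 2 * ε := by nlinarith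
    have hinv : ε⁻¹ ^ 2 ≤ ε⁻¹ ^ 3 := pow_le_pow_right₀ ((one_le_inv₀ hε).2 hε1) (by norm_num)
    exact add_le_add (mul_le_mul_of_nonneg_right hε_sq hD)
      (mul_le_mul_of_nonneg_right (mul_le_mul_of_nonneg_left hinv zero_le_four) hN)
  calc _ ≤ stepL2 Q * (2 * ε * D + 4 * ε⁻¹ ^ 3 * N) + stepL1 τ * (2 * ε * D + 4 * ε⁻¹ ^ 3 * N) :=
        (norm_sub_le _ _).trans (add_le_add first_order_le
          (potential_le.trans (mul_le_mul_of_nonneg_left weaken (stepL1_nonneg τ))))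
    _ = Kc Q τ * (ε * D + 2 * ε⁻¹ ^ 3 * N) := by
        rw [Kc]
        ring

end Form

/-- Sectoriality estimate for the form `t`: for `0 < ε ≤ (2K+1)⁻¹`,
`|Im t[u]| ≤ 2Kε Re t[u] + 8Kε⁻³‖u‖²`. -/
theorem im_tform_estimate (Q τ u u' : ℝ → ℂ)
    (hQ : InStepL2 Q) (hτ : InStepL1 τ) (hu : InH1 u u')
    (ε : ℝ) (hε : 0 < ε) (hε1 : ε ≤ (2 * Kc Q τ + 1)⁻¹) :
    |(tform Q τ u u').im| ≤
      2 * Kc Q τ * ε * (tform Q τ u u').re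
        + 8 * Kc Q τ * ε⁻¹ ^ 3 * (∫ x : ℝ, ‖u x‖ ^ 2) := by
  have hK : 0 ≤ Kc Q τ := Kc_nonneg Q τ
  have hεK : ε * (2 * Kc Q τ + 1) ≤ 1 := by
    rwa [← le_div_iff₀ (by positivity), one_div]
  have hε_le_one : ε ≤ 1 := by nlinarith
  have sector := abs_im_le_of_norm_sub_ofReal_le (θ := 2 * Kc Q τ * ε)
    (R := 2 * Kc Q τ * ε⁻¹ ^ 3 * ∫ x, ‖u x‖ ^ 2) (by positivity) (by linarith)
    ((hu.norm_tform_sub_le hQ hτ hε hε_le_one).trans_eq (by ring))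
  have remainder_nonneg : 0 ≤ Kc Q τ * ε⁻¹ ^ 3 * ∫ x, ‖u x‖ ^ 2 := by positivity
  linarith
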